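/- (Image of the longitude of the cinquefoil.) Let m, d, s ∈ ℂ with m ≠ 0, s² = m, s ≠ s⁻¹ (i.e. m ≠ 1), and suppose d² − (2m + 2m⁻¹ − 1)·d + (m² − m + 1 − m⁻¹ + m⁻²) = 0. Let X = [[s,1],[0,s⁻¹]], Y = [[s,0],[−d,s⁻¹]]. Then the image of the longitude λ = yxyxy⁻¹xyxyx⁻⁷, namely Y·X·Y·X·Y⁻¹·X·Y·X·Y·(X⁻¹)⁷, equals [[−m⁻⁵, (m⁵ − m⁻⁵)/(s − s⁻¹)],[0, −m⁵]] (and this holds for both roots d of the quadratic). -/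

import Mathlib

/-!
Put `ω = (xy)²`. The knot relation `ωx = yω` turns the longitude into `(xy)⁵ x⁻¹⁰`. For matrices of
determinant `1`, `t = xy + (xy)⁻¹` is the trace of `xy`, a scalar, and
`ωx - t(x - y⁻¹) = (t² - t - 1)x`, while exchanging `x` and `y` gives
`yω - t(y - x⁻¹) = (t² - t - 1)y`. As `x` and `y` have equal traces, `x - y⁻¹ = y - x⁻¹`, so the single equation
`t² = t + 1` yields the knot relation; it also yields `(xy)⁵ = -1`, and the longitude becomes
`-x⁻¹⁰`. Here `t = m + m⁻¹ - d`, and `t² = t + 1` is the quadratic equation for `d`.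
-/

open Matrix

section Longitude

variable {G : Type*} [Group G] {x y : G}

-- For `ω = (xy)ᵏ` the relation `ωx = yω` presents the group of the torus knot `T(2, 2k + 1)`, and
-- the left-hand side is its longitude up to a power of the meridian `x`.
lemma mul_pow_mul_inv_mul_mul_pow_of_semiconjBy {k : ℕ} (h : SemiconjBy ((x * y) ^ k) x y) :
    (y * x) ^ k * y⁻¹ * (x * y) ^ k = (x * y) ^ (2 * k + 1) * x⁻¹ ^ 3 := by
  have left : (y * x) ^ k = (x * y) ^ k * x * y⁻¹ := by
    rw [h.eq, ← mul_pow_mul, mul_inv_cancel_right]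
  have right : y⁻¹ * (x * y) ^ k = (x * y) ^ k * x⁻¹ := h.inv_right.eq.symm
  have square : (x * y) ^ k * x * ((x * y) ^ k * x) = (x * y) ^ (2 * k + 1) :=
    calc (x * y) ^ k * x * ((x * y) ^ k * x) = (x * y) ^ k * (x * y) * (x * y) ^ k := by
          rw [h.eq]; simp only [← h.eq, mul_assoc]
      _ = (x * y) ^ (2 * k + 1) := by rw [← pow_succ, ← pow_add]; congr 1; lia
  calc (y * x) ^ k * y⁻¹ * (x * y) ^ k
      = (x * y) ^ k * x * y⁻¹ * ((x * y) ^ k * x⁻¹) := by rw [left, mul_assoc, right]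
    _ = (x * y) ^ k * x * (y⁻¹ * (x * y) ^ k) * x⁻¹ := by simp only [mul_assoc]
    _ = (x * y) ^ k * x * ((x * y) ^ k * x) * x⁻¹ ^ 3 := by rw [right]; simp [pow_succ, mul_assoc]
    _ = (x * y) ^ (2 * k + 1) * x⁻¹ ^ 3 := by rw [square]

/-- The word `λ = yxyxy⁻¹xyxyx⁻⁷` for the longitude of the cinquefoil knot in terms of two
meridians `x` and `y`. -/
def cinquefoilLongitude (x y : G) : G :=
  y * x * y * x * y⁻¹ * x * y * x * y * x⁻¹ ^ 7

lemma cinquefoilLongitude_eq_of_semiconjBy (h : SemiconjBy ((x * y) ^ 2) x y) :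
    cinquefoilLongitude x y = (x * y) ^ 5 * x⁻¹ ^ 10 :=
  calc cinquefoilLongitude x y = (y * x) ^ 2 * y⁻¹ * (x * y) ^ 2 * x⁻¹ ^ 7 := by
        simp only [cinquefoilLongitude, pow_two, mul_assoc]
    _ = (x * y) ^ 5 * x⁻¹ ^ 10 := by
        rw [mul_pow_mul_inv_mul_mul_pow_of_semiconjBy h, mul_assoc, ← pow_add]

end Longitude

section AddInv

variable {A : Type*} [Ring A] {x y : Aˣ}

/-- The sum `u + u⁻¹` for a unit `u` of a ring. For a `2 × 2` matrix of determinant `1` it is the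
scalar matrix given by the trace; here it plays the role of the trace in any ring. -/
def addInv (u : Aˣ) : A := u + ↑u⁻¹

lemma addInv_mul_self (u : Aˣ) : addInv u * u = u ^ 2 + 1 := by
  rw [addInv, add_mul, Units.inv_mul, pow_two]

lemma commute_addInv_self (u : Aˣ) : Commute (addInv u) u := by
  rw [Commute, SemiconjBy, addInv, add_mul, mul_add, Units.inv_mul, Units.mul_inv]

lemma addInv_mul_comm_of_commute (h : Commute (addInv (x * y)) x) :
    addInv (x * y) = addInv (y * x) := by
  have conj : (x : A) * addInv (y * x) = addInv (x * y) * x := by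
    simp [addInv, mul_add, add_mul, mul_assoc]
  exact (x.mul_right_inj.mp (conj.trans h.eq)).symm

lemma pow_five_eq_neg_one_of_addInv_sq {u : Aˣ} (h : addInv u ^ 2 = addInv u + 1) :
    u ^ 5 = -1 := by
  have sq : (u : A) ^ 2 = addInv u * u - 1 := by rw [addInv_mul_self, add_sub_cancel_right]
  have cube : (u : A) ^ 3 = addInv u * u - addInv u :=
    calc (u : A) ^ 3 = (addInv u * u - 1) * u := by rw [pow_succ, sq]
      _ = addInv u * u ^ 2 - u := by noncomm_ring
      _ = addInv u ^ 2 * u - addInv u - u := by rw [sq]; noncomm_ring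
      _ = addInv u * u - addInv u := by rw [h]; noncomm_ring
  ext
  push_cast
  calc (u : A) ^ 5 = u ^ 3 * u ^ 2 := pow_add _ 3 2
    _ = (addInv u * u - addInv u) * u ^ 2 := by rw [cube]
    _ = addInv u * (u ^ 3 - u ^ 2) := by noncomm_ring
    _ = addInv u - addInv u ^ 2 := by rw [cube, sq]; noncomm_ring
    _ = -1 := by rw [h]; noncomm_ring

lemma mul_sq_mul_eq_addInv_mul_sub (h : addInv (x * y) ^ 2 = addInv (x * y) + 1) :
    (((x * y) ^ 2 * x : Aˣ) : A) = addInv (x * y) * (x - ↑y⁻¹) := by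
  have hxyx : (x * y * x : A) = addInv (x * y) * x - ↑y⁻¹ := by
    simp [addInv, add_mul, mul_assoc]
  calc (((x * y) ^ 2 * x : Aˣ) : A) = (x * y : Aˣ) * (x * y * x) := by
        push_cast; noncomm_ring
    _ = (x * y : Aˣ) * (addInv (x * y) * x - ↑y⁻¹) := by rw [hxyx]
    _ = addInv (x * y) * (x * y * x) - x := by
        rw [mul_sub, ← mul_assoc, ← (commute_addInv_self _).eq]
        simp [mul_assoc]
    _ = addInv (x * y) ^ 2 * x - addInv (x * y) * ↑y⁻¹ - x := by rw [hxyx]; noncomm_ring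
    _ = addInv (x * y) * (x - ↑y⁻¹) := by rw [h]; noncomm_ring

lemma semiconjBy_mul_sq_of_addInv (hxy : addInv x = addInv y)
    (hx : Commute (addInv (x * y)) x) (h : addInv (x * y) ^ 2 = addInv (x * y) + 1) :
    SemiconjBy ((x * y) ^ 2) x y := by
  have hcomm := addInv_mul_comm_of_commute hx
  have hsub : (x - ↑y⁻¹ : A) = y - ↑x⁻¹ := sub_eq_sub_iff_add_eq_add.mpr hxy
  ext
  calc (((x * y) ^ 2 * x : Aˣ) : A) = addInv (x * y) * (x - ↑y⁻¹) :=
        mul_sq_mul_eq_addInv_mul_sub h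
    _ = addInv (y * x) * (y - ↑x⁻¹) := by rw [hcomm, hsub]
    _ = ((y * x) ^ 2 * y : Aˣ) := (mul_sq_mul_eq_addInv_mul_sub (hcomm ▸ h)).symm
    _ = (y * (x * y) ^ 2 : Aˣ) := by rw [mul_pow_mul]

theorem cinquefoilLongitude_eq_neg_inv_pow (hxy : addInv x = addInv y)
    (hx : Commute (addInv (x * y)) x) (h : addInv (x * y) ^ 2 = addInv (x * y) + 1) :
    cinquefoilLongitude x y = -x⁻¹ ^ 10 := by
  rw [cinquefoilLongitude_eq_of_semiconjBy (semiconjBy_mul_sq_of_addInv hxy hx h),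
    pow_five_eq_neg_one_of_addInv_sq h, neg_one_mul]

end AddInv

section Riley

variable {R : Type*} [CommRing R] (s : Rˣ) (d : R)

/-- The image `X` of the meridian `x` under a representation in Riley's normal form, as a
unit, so that words in the knot group can be evaluated in a group. -/
def rileyX : GL (Fin 2) R where
  val := !![↑s, 1; 0, ↑s⁻¹]
  inv := !![↑s⁻¹, -1; 0, ↑s]
  val_inv := by simp [one_fin_two]
  inv_val := by simp [one_fin_two]

/-- The image `Y` of the meridian `y` under a representation in Riley's normal form, with
parameter `d`. -/
def rileyY : GL (Fin 2) R where
  val := !![↑s, 0; -d, ↑s⁻¹]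
  inv := !![↑s⁻¹, 0; d, ↑s]
  val_inv := by simp [one_fin_two, mul_comm]
  inv_val := by simp [one_fin_two, mul_comm]

lemma coe_rileyX : (rileyX s).val = !![↑s, 1; 0, ↑s⁻¹] := rfl

lemma coe_inv_rileyX : (rileyX s)⁻¹.val = !![↑s⁻¹, -1; 0, ↑s] := rfl

lemma coe_rileyY : (rileyY s d).val = !![↑s, 0; -d, ↑s⁻¹] := rfl

lemma coe_inv_rileyY : (rileyY s d)⁻¹.val = !![↑s⁻¹, 0; d, ↑s] := rfl

lemma addInv_rileyX_eq_addInv_rileyY : addInv (rileyX s) = addInv (rileyY s d) := by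
  rw [addInv, addInv, coe_rileyX, coe_inv_rileyX, coe_rileyY, coe_inv_rileyY]
  simp

lemma addInv_rileyX_mul_rileyY :
    addInv (rileyX s * rileyY s d) = scalar (Fin 2) (s ^ 2 + ↑s⁻¹ ^ 2 - d) := by
  rw [addInv, _root_.mul_inv_rev, Units.val_mul, Units.val_mul, coe_rileyX, coe_inv_rileyX,
    coe_rileyY, coe_inv_rileyY]
  ext i j
  fin_cases i <;> fin_cases j <;> simp <;> ring

variable {s d} in
theorem cinquefoilLongitude_rileyX_rileyY
    (h : (s ^ 2 + ↑s⁻¹ ^ 2 - d : R) ^ 2 = (s ^ 2 + ↑s⁻¹ ^ 2 - d) + 1) :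
    cinquefoilLongitude (rileyX s) (rileyY s d) = -(rileyX s)⁻¹ ^ 10 := by
  refine cinquefoilLongitude_eq_neg_inv_pow (addInv_rileyX_eq_addInv_rileyY s d) ?_ ?_
  · rw [addInv_rileyX_mul_rileyY]
    exact scalar_commute _ (Commute.all _) _
  · rw [addInv_rileyX_mul_rileyY, ← map_pow, h, map_add, map_one]

end Riley

lemma upperTriangular_fin_two_pow {R : Type*} [CommRing R] (a b c : R) (n : ℕ) :
    !![a, b; 0, c] ^ n =
      !![a ^ n, b * ∑ i ∈ Finset.range n, a ^ i * c ^ (n - 1 - i); 0, c ^ n] := by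
  induction n with
  | zero => simp [one_fin_two]
  | succ n ih =>
    rw [pow_succ, ih, mul_fin_two, Nat.add_sub_cancel, geom_sum₂_succ_eq]
    simp only [pow_succ, mul_zero, zero_mul, add_zero, zero_add]
    congr! 4
    ring

theorem cinquefoil_longitude_general {K : Type*} [Field K] (m d s : K) (hs : s ^ 2 = m)
    (hss : s ≠ s⁻¹)
    (hd : d ^ 2 - (2 * m + 2 * m⁻¹ - 1) * d +
      (m ^ 2 - m + 1 - m⁻¹ + (m ^ 2)⁻¹) = 0)
    (X Y : Matrix (Fin 2) (Fin 2) K)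
    (hX : X = !![s, 1; 0, s⁻¹]) (hY : Y = !![s, 0; -d, s⁻¹]) :
    Y * X * Y * X * Y⁻¹ * X * Y * X * Y * (X⁻¹) ^ 7 =
      !![-(m ^ 5)⁻¹, (m ^ 5 - (m ^ 5)⁻¹) / (s - s⁻¹); 0, -(m ^ 5)] := by
  have hs0 : s ≠ 0 := by
    rintro rfl
    exact hss inv_zero.symm
  lift s to Kˣ using hs0.isUnit
  have hτ : (s ^ 2 + ↑s⁻¹ ^ 2 - d : K) ^ 2 = (s ^ 2 + ↑s⁻¹ ^ 2 - d) + 1 := by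
    rw [Units.val_inv_eq_inv_val]
    subst hs
    field_simp at hd ⊢
    linear_combination hd
  have hX' : X = rileyX s := by rw [hX, coe_rileyX, Units.val_inv_eq_inv_val]
  have hY' : Y = rileyY s d := by rw [hY, coe_rileyY, Units.val_inv_eq_inv_val]
  calc Y * X * Y * X * Y⁻¹ * X * Y * X * Y * (X⁻¹) ^ 7
      = (cinquefoilLongitude (rileyX s) (rileyY s d)).val := by
        simp only [cinquefoilLongitude, Units.val_mul, Units.val_pow_eq_pow_val, coe_units_inv,
          hX', hY']
    _ = -!![(s : K)⁻¹, -1; 0, s] ^ 10 := by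
        rw [cinquefoilLongitude_rileyX_rileyY hτ, Units.val_neg, Units.val_pow_eq_pow_val,
          coe_inv_rileyX, Units.val_inv_eq_inv_val]
    _ = !![-(m ^ 5)⁻¹, (m ^ 5 - (m ^ 5)⁻¹) / (s - (s : K)⁻¹); 0, -(m ^ 5)] := by
        rw [upperTriangular_fin_two_pow, geom_sum₂_comm, geom₂_sum hss, ← hs]
        simp [← pow_mul]

/-- (Image of the longitude of the cinquefoil.) With `X = [[s,1],[0,s⁻¹]]`,
`Y = [[s,0],[−d,s⁻¹]]`, `s² = m ≠ 1`, and
`d² − (2m + 2m⁻¹ − 1)d + (m² − m + 1 − m⁻¹ + m⁻²) = 0`, the image of the longitude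
`λ = yxyxy⁻¹xyxyx⁻⁷`, namely `Y X Y X Y⁻¹ X Y X Y (X⁻¹)⁷`, equals
`[[−m⁻⁵, (m⁵ − m⁻⁵)/(s − s⁻¹)],[0, −m⁵]]`, for both roots `d` of the quadratic. -/
theorem cinquefoil_longitude (m d s : ℂ) (hm : m ≠ 0) (hs : s ^ 2 = m)
    (hss : s ≠ s⁻¹)
    (hd : d ^ 2 - (2 * m + 2 * m⁻¹ - 1) * d +
      (m ^ 2 - m + 1 - m⁻¹ + (m ^ 2)⁻¹) = 0)
    (X Y : Matrix (Fin 2) (Fin 2) ℂ)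
    (hX : X = !![s, 1; 0, s⁻¹]) (hY : Y = !![s, 0; -d, s⁻¹]) :
    Y * X * Y * X * Y⁻¹ * X * Y * X * Y * (X⁻¹) ^ 7 =
      !![-(m ^ 5)⁻¹, (m ^ 5 - (m ^ 5)⁻¹) / (s - s⁻¹); 0, -(m ^ 5)] :=
  cinquefoil_longitude_general m d s hs hss hd X Y hX hY
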